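/- Let G = GL_2(𝔽_q), T the diagonal torus, B the upper-triangular Borel, and λ₁ ≠ λ₂ characters of 𝔽_q^×. For characters μ₁, μ₂ of 𝔽_q^×, the multiplicity of the character μ₁ ⊗ μ₂ of T ≅ 𝔽_q^× × 𝔽_q^× in the restriction to T of the induced representation Ind_B^G(λ₁ ⊗ λ₂) is: 0 if μ₁μ₂ ≠ λ₁λ₂; 2 if (μ₁, μ₂) = (λ₁, λ₂) or (μ₁, μ₂) = (λ₂, λ₁); and 1 if μ₁μ₂ = λ₁λ₂ but {μ₁, μ₂} ≠ {λ₁, λ₂}. -/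

import Mathlib

open scoped Classical

/-- Extension of a character of `Fˣ` to `F`, by zero. -/
noncomputable def extChar {F : Type*} [Field F] (l : Fˣ →* ℂˣ) : F → ℂ :=
  fun x => if h : x = 0 then 0 else (l (Units.mk0 x h) : ℂ)

/-- The value of the character `λ` of the Borel `B` at an upper-triangular matrix. -/
noncomputable def borelCharVal {F : Type*} [Field F] (l₁ l₂ : Fˣ →* ℂˣ)
    (b : GL (Fin 2) F) : ℂ :=
  extChar l₁ ((b : Matrix (Fin 2) (Fin 2) F) 0 0) *
    extChar l₂ ((b : Matrix (Fin 2) (Fin 2) F) 1 1)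

/-- The character of `Ind_B^G λ`, computed by the standard induced-character formula
`χ(g) = (1/|B|) ∑_{s ∈ G, s⁻¹ g s ∈ B} λ(s⁻¹ g s)`. -/
noncomputable def inducedChar {F : Type*} [Field F] [Fintype F]
    (l₁ l₂ : Fˣ →* ℂˣ) (g : GL (Fin 2) F) : ℂ :=
  (1 / (Fintype.card {b : GL (Fin 2) F //
      (b : Matrix (Fin 2) (Fin 2) F) 1 0 = 0} : ℂ)) *
    ∑ s : GL (Fin 2) F,
      if ((s⁻¹ * g * s : GL (Fin 2) F) : Matrix (Fin 2) (Fin 2) F) 1 0 = 0 then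
        borelCharVal l₁ l₂ (s⁻¹ * g * s)
      else 0

/-- The diagonal matrix `diag(x, y)` as an element of `GL₂(F)`. -/
noncomputable def diagGL {F : Type*} [Field F] (x y : Fˣ) : GL (Fin 2) F :=
  Matrix.GeneralLinearGroup.mkOfDetNeZero (Matrix.diagonal ![(x : F), (y : F)])
    (by simp [Matrix.det_diagonal, Fin.prod_univ_two])

/-- The multiplicity of the character `μ₁ ⊗ μ₂` of the diagonal torus `T ≅ Fˣ × Fˣ`
in the restriction to `T` of the principal series `Ind_B^G (λ₁ ⊗ λ₂)`, computed as the
inner product `(1/|T|) ∑_{t ∈ T} χ(t) conj(μ₁(t₁) μ₂(t₂))`. -/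
noncomputable def torusMultiplicity {F : Type*} [Field F] [Fintype F]
    (l₁ l₂ μ₁ μ₂ : Fˣ →* ℂˣ) : ℂ :=
  (1 / ((Fintype.card Fˣ : ℂ) ^ 2)) *
    ∑ x : Fˣ, ∑ y : Fˣ,
      inducedChar l₁ l₂ (diagGL x y) *
        (starRingEnd ℂ) ((μ₁ x : ℂ) * (μ₂ y : ℂ))

theorem extChar_unit {F : Type*} [Field F] (l : Fˣ →* ℂˣ) (x : Fˣ) :
    extChar l (x : F) = (l x : ℂ) := by
  simp [extChar]

theorem conj_key {F : Type*} [Field F] (x y : Fˣ) (s : GL (Fin 2) F) :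
    ∀ M : Matrix (Fin 2) (Fin 2) F,
      M = ((s⁻¹ * diagGL x y * s : GL (Fin 2) F) : Matrix (Fin 2) (Fin 2) F) →
      (s 0 0 * M 0 0 + s 0 1 * M 1 0 = x * s 0 0) ∧
      (s 0 0 * M 0 1 + s 0 1 * M 1 1 = x * s 0 1) ∧
      (s 1 0 * M 0 0 + s 1 1 * M 1 0 = y * s 1 0) ∧
      (s 1 0 * M 0 1 + s 1 1 * M 1 1 = y * s 1 1) := by
  intro M hM
  have h : (s : Matrix (Fin 2) (Fin 2) F) * M
      = Matrix.diagonal ![(x : F), (y : F)] * (s : Matrix (Fin 2) (Fin 2) F) := by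
    have h1 : s * (s⁻¹ * diagGL x y * s) = diagGL x y * s := by group
    have h2 := congrArg (fun g : GL (Fin 2) F => (g : Matrix (Fin 2) (Fin 2) F)) h1
    rw [hM]
    simp only [Units.val_mul] at h2 ⊢
    exact h2
  have e := fun i j => congrFun (congrFun h i) j
  have e00 := e 0 0
  have e01 := e 0 1
  have e10 := e 1 0
  have e11 := e 1 1
  simp [Matrix.mul_apply, Fin.sum_univ_two, Matrix.diagonal_apply] at e00 e01 e10 e11
  exact ⟨e00, e01, e10, e11⟩

theorem det_ne {F : Type*} [Field F] (s : GL (Fin 2) F) :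
    s 0 0 * s 1 1 - s 0 1 * s 1 0 ≠ 0 := by
  have h := (Matrix.isUnit_iff_isUnit_det _).1 s.isUnit
  rw [Matrix.det_fin_two] at h
  exact h.ne_zero

theorem pointwise_key {F : Type*} [Field F] [Fintype F] (l₁ l₂ : Fˣ →* ℂˣ) (x y : Fˣ)
    (s : GL (Fin 2) F) :
    (if ((s⁻¹ * diagGL x y * s : GL (Fin 2) F) : Matrix (Fin 2) (Fin 2) F) 1 0 = 0 then
        borelCharVal l₁ l₂ (s⁻¹ * diagGL x y * s) else 0) =
      (if s 1 0 = 0 then 1 else 0) * ((l₁ x : ℂ) * l₂ y)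
      + (if s 0 0 = 0 then 1 else 0) * ((l₁ y : ℂ) * l₂ x)
      + (∑ t : Fˣ, if s 1 0 = t * s 0 0 then 1 else 0) *
        (if x = y then (l₁ x : ℂ) * l₂ x else 0) := by
  have hd := det_ne s
  unfold borelCharVal
  generalize hM : ((s⁻¹ * diagGL x y * s : GL (Fin 2) F) : Matrix (Fin 2) (Fin 2) F) = M
  obtain ⟨e1, e2, e3, e4⟩ := conj_key x y s M hM.symm
  generalize s 0 0 = a at *
  generalize s 0 1 = b at *
  generalize s 1 0 = c at *
  generalize s 1 1 = d at *
  have hx := x.ne_zero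
  have hy := y.ne_zero
  by_cases hc : c = 0
  · subst hc
    have ha : a ≠ 0 := by rintro rfl; simp at hd
    have hd' : d ≠ 0 := by rintro rfl; simp at hd
    have m10 : M 1 0 = 0 := by simpa [hd'] using e3
    have m00 : M 0 0 = x := by
      apply mul_left_cancel₀ ha; rw [m10] at e1; linear_combination e1
    have m11 : M 1 1 = y := by
      apply mul_left_cancel₀ hd'; linear_combination e4
    have : ∀ t : Fˣ, ¬ (0 = (t : F) * a) := fun t h => by
      simp [ha] at h
    simp only [this, m10, m00, m11, extChar_unit, ha]
    simp
  by_cases ha : a = 0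
  · subst ha
    have hb : b ≠ 0 := by rintro rfl; simp at hd
    have m10 : M 1 0 = 0 := by simpa [hb] using e1
    have m00 : M 0 0 = y := by
      apply mul_left_cancel₀ hc; rw [m10] at e3; linear_combination e3
    have m11 : M 1 1 = x := by
      apply mul_left_cancel₀ hb; linear_combination e2
    simp only [m10, m00, m11, extChar_unit]
    simp [hc]
  have hs : (∑ t : Fˣ, if c = t * a then (1 : ℂ) else 0) = 1 := by
    rw [Finset.sum_eq_single (Units.mk0 (c / a) (div_ne_zero hc ha))]
    · simp [ha]
    · intro t _ ht
      rw [if_neg]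
      intro h
      apply ht
      ext
      simp [h, ha]
    · simp
  rw [hs]
  by_cases hxy : x = y
  · subst hxy
    have m10 : M 1 0 = 0 := by
      apply mul_left_cancel₀ hd; linear_combination a * e3 - c * e1
    have m00 : M 0 0 = x := by
      apply mul_left_cancel₀ hd; linear_combination d * e1 - b * e3
    have m11 : M 1 1 = x := by
      apply mul_left_cancel₀ hd; linear_combination a * e4 - c * e2
    simp only [m10, m00, m11, extChar_unit]
    simp [ha, hc]
  · have m10 : M 1 0 ≠ 0 := by
      intro m10
      apply hxy
      ext
      rw [m10] at e1 e3
      have h1 : M 0 0 = x := by apply mul_left_cancel₀ ha; linear_combination e1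
      have h2 : M 0 0 = y := by apply mul_left_cancel₀ hc; linear_combination e3
      exact h1.symm.trans h2
    simp [m10, hxy, ha, hc]

theorem count_low {F : Type*} [Field F] [Fintype F] (t : F) :
    (∑ s : GL (Fin 2) F, if s 1 0 = t * s 0 0 then (1 : ℂ) else 0)
      = ∑ s : GL (Fin 2) F, if s 1 0 = 0 then (1 : ℂ) else 0 := by
  let L : GL (Fin 2) F := Matrix.GeneralLinearGroup.mkOfDetNeZero !![1, 0; -t, 1] (by simp)
  refine Fintype.sum_equiv (Equiv.mulLeft L) _ _ fun s => ?_
  have : (L * s) 1 0 = s 1 0 - t * s 0 0 := by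
    simp [L, Matrix.mul_apply, Fin.sum_univ_two, Matrix.GeneralLinearGroup.mkOfDetNeZero]
    ring
  rw [Equiv.coe_mulLeft, this]
  simp only [sub_eq_zero]

theorem count_swap {F : Type*} [Field F] [Fintype F] :
    (∑ s : GL (Fin 2) F, if s 0 0 = 0 then (1 : ℂ) else 0)
      = ∑ s : GL (Fin 2) F, if s 1 0 = 0 then (1 : ℂ) else 0 := by
  let L : GL (Fin 2) F := Matrix.GeneralLinearGroup.mkOfDetNeZero !![0, 1; 1, 0] (by simp)
  refine Fintype.sum_equiv (Equiv.mulLeft L) _ _ fun s => ?_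
  have : (L * s) 1 0 = s 0 0 := by
    simp [L, Matrix.mul_apply, Fin.sum_univ_two, Matrix.GeneralLinearGroup.mkOfDetNeZero]
  rw [Equiv.coe_mulLeft, this]

theorem inducedChar_diag {F : Type*} [Field F] [Fintype F] (l₁ l₂ : Fˣ →* ℂˣ) (x y : Fˣ) :
    inducedChar l₁ l₂ (diagGL x y) = (l₁ x : ℂ) * l₂ y + (l₁ y : ℂ) * l₂ x
      + Fintype.card Fˣ * (if x = y then (l₁ x : ℂ) * l₂ x else 0) := by
  unfold inducedChar
  have hB : (Fintype.card {b : GL (Fin 2) F // (b : Matrix (Fin 2) (Fin 2) F) 1 0 = 0} : ℂ)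
      = ∑ s : GL (Fin 2) F, if s 1 0 = 0 then (1 : ℂ) else 0 := by
    rw [Fintype.card_subtype, Finset.sum_boole]
  have hne : (Fintype.card {b : GL (Fin 2) F //
      (b : Matrix (Fin 2) (Fin 2) F) 1 0 = 0} : ℂ) ≠ 0 := by
    have : Nonempty {b : GL (Fin 2) F // (b : Matrix (Fin 2) (Fin 2) F) 1 0 = 0} :=
      ⟨⟨1, by simp⟩⟩
    exact_mod_cast Fintype.card_ne_zero
  rw [Finset.sum_congr rfl fun s _ => pointwise_key l₁ l₂ x y s]
  rw [Finset.sum_add_distrib, Finset.sum_add_distrib, ← Finset.sum_mul, ← Finset.sum_mul,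
    ← Finset.sum_mul, Finset.sum_comm, Finset.sum_congr rfl fun (t : Fˣ) _ => count_low (t : F),
    count_swap, ← hB, Finset.sum_const, Finset.card_univ, nsmul_eq_mul]
  field_simp

theorem orth {F : Type*} [Field F] [Fintype F] (l m : Fˣ →* ℂˣ) :
    ∑ x : Fˣ, (l x : ℂ) * (starRingEnd ℂ) (m x : ℂ)
      = if l = m then (Fintype.card Fˣ : ℂ) else 0 := by
  have hc : ∀ x, (starRingEnd ℂ) (m x : ℂ) = (((m x)⁻¹ : ℂˣ) : ℂ) := fun x => by
    have hn : ‖(m x : ℂ)‖ = 1 := by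
      apply Complex.norm_eq_one_of_pow_eq_one (n := Fintype.card Fˣ) _ Fintype.card_ne_zero
      rw [← Units.val_pow_eq_pow_val, ← map_pow, pow_card_eq_one, map_one, Units.val_one]
    rw [Units.val_inv_eq_inv_val, Complex.inv_eq_conj hn]
  have h := sum_hom_units ((Units.coeHom ℂ).comp (l / m))
  have h1 : (Units.coeHom ℂ).comp (l / m) = 1 ↔ l = m := by
    rw [← div_eq_one (a := l) (b := m)]
    constructor
    · intro h
      ext x
      exact DFunLike.congr_fun h x
    · intro h
      rw [h]
      ext x
      simp
  simp only [h1] at h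
  have h2 : ∑ x : Fˣ, (l x : ℂ) * (starRingEnd ℂ) (m x : ℂ)
      = ∑ x : Fˣ, ((Units.coeHom ℂ).comp (l / m)) x := by
    refine Finset.sum_congr rfl fun x _ => ?_
    rw [hc]
    simp [div_eq_mul_inv]
  rw [h2, h]
  split_ifs <;> simp

theorem torusMultiplicity_eq {F : Type*} [Field F] [Fintype F] (l₁ l₂ μ₁ μ₂ : Fˣ →* ℂˣ) :
    torusMultiplicity l₁ l₂ μ₁ μ₂ =
      (if l₁ = μ₁ then 1 else 0) * (if l₂ = μ₂ then 1 else 0)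
      + (if l₂ = μ₁ then 1 else 0) * (if l₁ = μ₂ then 1 else 0)
      + (if l₁ * l₂ = μ₁ * μ₂ then 1 else 0) := by
  have hne : (Fintype.card Fˣ : ℂ) ≠ 0 := by exact_mod_cast Fintype.card_ne_zero
  have key : ∑ x : Fˣ, ∑ y : Fˣ, inducedChar l₁ l₂ (diagGL x y) *
        (starRingEnd ℂ) ((μ₁ x : ℂ) * (μ₂ y : ℂ)) =
      (∑ x : Fˣ, (l₁ x : ℂ) * (starRingEnd ℂ) (μ₁ x : ℂ)) *
        (∑ y : Fˣ, (l₂ y : ℂ) * (starRingEnd ℂ) (μ₂ y : ℂ))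
      + (∑ x : Fˣ, (l₂ x : ℂ) * (starRingEnd ℂ) (μ₁ x : ℂ)) *
        (∑ y : Fˣ, (l₁ y : ℂ) * (starRingEnd ℂ) (μ₂ y : ℂ))
      + Fintype.card Fˣ * ∑ x : Fˣ, ((l₁ * l₂) x : ℂˣ) * (starRingEnd ℂ) ((μ₁ * μ₂) x : ℂˣ) := by
    rw [Finset.sum_mul_sum, Finset.sum_mul_sum, Finset.mul_sum, ← Finset.sum_add_distrib,
      ← Finset.sum_add_distrib]
    refine Finset.sum_congr rfl fun x _ => ?_
    have h3 : (Fintype.card Fˣ : ℂ) * (((l₁ * l₂) x : ℂˣ) * (starRingEnd ℂ) ((μ₁ * μ₂) x : ℂˣ))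
        = ∑ y : Fˣ, if x = y then (Fintype.card Fˣ : ℂ) * ((l₁ x : ℂ) * l₂ x *
          ((starRingEnd ℂ) (μ₁ x : ℂ) * (starRingEnd ℂ) (μ₂ y : ℂ))) else 0 := by
      simp
    rw [h3, ← Finset.sum_add_distrib, ← Finset.sum_add_distrib]
    refine Finset.sum_congr rfl fun y _ => ?_
    rw [inducedChar_diag, map_mul]
    split_ifs <;> ring
  unfold torusMultiplicity
  rw [key, orth, orth, orth, orth, orth]
  split_ifs <;> field_simp <;> ring

theorem stmt_16 (F : Type*) [Field F] [Fintype F]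
    (l₁ l₂ μ₁ μ₂ : Fˣ →* ℂˣ) (hl : l₁ ≠ l₂) :
    (μ₁ * μ₂ ≠ l₁ * l₂ → torusMultiplicity l₁ l₂ μ₁ μ₂ = 0) ∧
    ((μ₁, μ₂) = (l₁, l₂) ∨ (μ₁, μ₂) = (l₂, l₁) → torusMultiplicity l₁ l₂ μ₁ μ₂ = 2) ∧
    (μ₁ * μ₂ = l₁ * l₂ → ¬((μ₁, μ₂) = (l₁, l₂) ∨ (μ₁, μ₂) = (l₂, l₁)) →
      torusMultiplicity l₁ l₂ μ₁ μ₂ = 1) := by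
  have hcomm : ∀ a b : Fˣ →* ℂˣ, a * b = b * a := fun a b => by
    ext x
    simp [mul_comm]
  rw [torusMultiplicity_eq]
  refine ⟨fun h => ?_, fun h => ?_, fun h h' => ?_⟩
  · have h1 : ¬ (l₁ * l₂ = μ₁ * μ₂) := fun e => h e.symm
    have h2 : ¬ (l₁ = μ₁ ∧ l₂ = μ₂) := by rintro ⟨rfl, rfl⟩; exact h rfl
    have h3 : ¬ (l₂ = μ₁ ∧ l₁ = μ₂) := by rintro ⟨rfl, rfl⟩; exact h (hcomm _ _)
    rw [if_neg h1]
    split_ifs <;> simp_all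
  · simp only [Prod.mk.injEq] at h
    rcases h with ⟨rfl, rfl⟩ | ⟨rfl, rfl⟩
    · simp [hl, hl.symm]; norm_num
    · simp [hl, hl.symm, hcomm μ₂ μ₁]; norm_num
  · simp only [Prod.mk.injEq, not_or] at h'
    obtain ⟨h2, h3⟩ := h'
    have h2 : ¬ (l₁ = μ₁ ∧ l₂ = μ₂) := by rintro ⟨rfl, rfl⟩; exact h2 ⟨rfl, rfl⟩
    have h3 : ¬ (l₂ = μ₁ ∧ l₁ = μ₂) := by rintro ⟨rfl, rfl⟩; exact h3 ⟨rfl, rfl⟩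
    rw [if_pos h.symm]
    split_ifs <;> simp_all
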